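/- Let λ > 0, P > 0, r₀ > 0, N₀ ≥ 0 and β > 0 be real. Let H be an exponential random variable with rate 1 and I a nonnegative real random variable independent of H whose Laplace transform satisfies E[e^{−z I}] = exp{ −πλ √(zP) · arctan( √(zP) / r₀² ) } for all z > 0. Let Υ = P·H·r₀^{−4} / (I + N₀) and erfc(x) = (2/√π) ∫_x^∞ e^{−t²} dt. Then E[ erfc( √(β Υ) ) ] = 1 − (1/√π) ∫_0^∞ z^{−1/2} exp{ −z(1 + N₀ r₀⁴/(P β)) − πλ r₀² √(z/β) arctan(√(z/β)) } dz, and E[ erfc²( √(β Υ) ) ] = 1 − (2/√π) ∫_0^∞ z^{−1/2} erfc(√z) exp{ −z(1 + N₀ r₀⁴/(P β)) − πλ r₀² √(z/β) arctan(√(z/β)) } dz. -/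

import Mathlib

/-!
Both identities are instances of the tail formula `E[G(X)] = ∫₀^∞ G'(z) P(X > z) dz`, valid for
`X = βΥ` and a nondecreasing bounded `G` that vanishes on `(-∞, 0]`
(`integral_comp_eq_integral_tail`, by Fubini). The relevant functions are
`G(x) = 1 - erfc(√x)` and `G(x) = 1 - erfc(√x)²`, whose derivatives on `(0, ∞)` are
`z^{-1/2} e^{-z} / √π` and `2 z^{-1/2} e^{-z} erfc(√z) / √π`.

The tail of `βΥ` comes from conditioning on `I`: since `H` is a unit exponential independent of
`I`, `P(H > c (I + N₀)) = E[e^{-c (I + N₀)}]` (`measureReal_exp_tail`), and with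
`c = z r₀⁴ / (P β)` the Laplace transform of `I` yields the stated exponential.
The Laplace transform tends to `0` at infinity, so `I > 0` almost surely
(`ae_pos_of_laplace`); hence the SINR denominator is almost surely nonzero, even when `N₀ = 0`.
-/

open MeasureTheory ProbabilityTheory Real

/-- The complementary error function `erfc x = (2/√π) ∫_x^∞ e^{−t²} dt`. -/
noncomputable def erfc (x : ℝ) : ℝ :=
  (2 / Real.sqrt π) * ∫ t in Set.Ioi x, Real.exp (-t ^ 2)

open Filter Topology in
/-- Tail formula for an expectation, for a bounded nondecreasing `G` vanishing on `(-∞, 0]` whose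
derivative `g` on `(0, ∞)` may blow up at `0`. -/
lemma integral_comp_eq_integral_tail {Ω : Type*} [MeasurableSpace Ω] (μ : Measure Ω)
    [IsProbabilityMeasure μ] {X : Ω → ℝ} (hX : Measurable X) {G g : ℝ → ℝ} {l : ℝ}
    (hG : Continuous G) (hG0 : ∀ x ≤ 0, G x = 0) (hd : ∀ x, 0 < x → HasDerivAt G (g x) x)
    (hg : ∀ x, 0 < x → 0 ≤ g x) (hl : Tendsto G atTop (𝓝 l)) :
    ∫ ω, G (X ω) ∂μ = ∫ z in Set.Ioi (0:ℝ), g z * μ.real {ω | z < X ω} := by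
  have hint : IntegrableOn g (Set.Ioi 0) :=
    integrableOn_Ioi_deriv_of_nonneg hG.continuousWithinAt (fun x hx => hd x hx)
      (fun x hx => hg x hx) hl
  have hGx : ∀ x, G x = ∫ z in Set.Ioi (0:ℝ), (Set.Iio x).indicator g z := by
    intro x
    rw [setIntegral_indicator measurableSet_Iio, Set.Ioi_inter_Iio]
    rcases le_or_gt x 0 with hx | hx
    · rw [hG0 x hx, Set.Ioo_eq_empty (not_lt.mpr hx)]; simp
    · rw [← integral_Ioc_eq_integral_Ioo, ← intervalIntegral.integral_of_le hx.le,
        intervalIntegral.integral_eq_sub_of_hasDerivAt_of_le hx.le hG.continuousOn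
          (fun y hy => hd y hy.1), hG0 0 le_rfl, sub_zero]
      rw [intervalIntegrable_iff_integrableOn_Ioc_of_le hx.le]
      exact hint.mono_set Set.Ioc_subset_Ioi_self
  have hS : MeasurableSet {p : Ω × ℝ | p.2 < X p.1} :=
    measurableSet_lt measurable_snd (hX.comp measurable_fst)
  have hint2 : Integrable (Function.uncurry fun (ω : Ω) (z : ℝ) => (Set.Iio (X ω)).indicator g z)
      (μ.prod (volume.restrict (Set.Ioi 0))) := by
    have h1 : Integrable (fun p : Ω × ℝ => g p.2) (μ.prod (volume.restrict (Set.Ioi 0))) :=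
      Integrable.comp_snd (f := g) hint μ
    exact h1.indicator hS
  simp_rw [hGx]
  rw [integral_integral_swap hint2]
  refine integral_congr_ae (Eventually.of_forall fun z => ?_)
  have : (fun ω => (Set.Iio (X ω)).indicator g z) = {ω | z < X ω}.indicator fun _ => g z := by
    ext ω; simp [Set.indicator_apply]
  simp only
  rw [this, integral_indicator_const _ (measurableSet_lt measurable_const hX), smul_eq_mul,
    mul_comm]

/-- Conditioning on `Y` in the event `H > Y`, for a unit exponential `H`. -/
lemma measureReal_exp_tail {Ω : Type*} [MeasurableSpace Ω] (μ : Measure Ω)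
    [IsProbabilityMeasure μ] {H Y : Ω → ℝ} (hH : Measurable H) (hY : Measurable Y)
    (hHexp : μ.map H = expMeasure 1) (hindep : IndepFun H Y μ) (hY0 : ∀ ω, 0 ≤ Y ω) :
    μ.real {ω | Y ω < H ω} = ∫ ω, Real.exp (-Y ω) ∂μ := by
  have hprob : IsProbabilityMeasure (expMeasure 1) := isProbabilityMeasure_expMeasure one_pos
  have htail : ∀ a : ℝ, 0 ≤ a → expMeasure 1 (Set.Ioi a) = ENNReal.ofReal (Real.exp (-a)) := by
    intro a ha
    have h1 := prob_compl_eq_one_sub (μ := expMeasure 1) (measurableSet_Iic (a := a))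
    rw [Set.compl_Iic, ← ofReal_cdf, cdf_expMeasure_eq one_pos, if_pos ha, one_mul] at h1
    rw [h1, ← ENNReal.ofReal_one, ← ENNReal.ofReal_sub _
      (by simpa using ha)]
    congr 1; ring
  have hS : MeasurableSet {p : ℝ × ℝ | p.2 < p.1} := measurableSet_lt measurable_snd measurable_fst
  have h1 : μ {ω | Y ω < H ω} = ∫⁻ ω, ENNReal.ofReal (Real.exp (-Y ω)) ∂μ := by
    have h2 : μ {ω | Y ω < H ω} = μ.map (fun ω => (H ω, Y ω)) {p : ℝ × ℝ | p.2 < p.1} := by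
      rw [Measure.map_apply (hH.prodMk hY) hS]; rfl
    rw [h2, hindep.map_prod_eq_prod_map_map hH.aemeasurable hY.aemeasurable, hHexp,
      Measure.prod_apply_symm hS, lintegral_map (measurable_measure_prodMk_right hS) hY]
    refine lintegral_congr fun ω => ?_
    rw [← htail _ (hY0 ω)]
    rfl
  rw [measureReal_def, h1, integral_eq_lintegral_of_nonneg_ae
    (Filter.Eventually.of_forall fun ω => (Real.exp_pos _).le)
    (by fun_prop)]

open Filter Topology in
/-- `P(I = 0) ≤ E[e^{-zI}]` for every `z > 0`, so a Laplace transform vanishing at infinity leaves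
no atom at `0`. -/
lemma ae_pos_of_laplace {Ω : Type*} [MeasurableSpace Ω] (μ : Measure Ω)
    [IsProbabilityMeasure μ] {I : Ω → ℝ} (hI : Measurable I) (hI0 : ∀ ω, 0 ≤ I ω)
    (hL : Tendsto (fun z : ℝ => ∫ ω, Real.exp (-z * I ω) ∂μ) atTop (𝓝 0)) :
    ∀ᵐ ω ∂μ, 0 < I ω := by
  have hS : MeasurableSet {ω | I ω = 0} := hI (measurableSet_singleton 0)
  have hle : ∀ z : ℝ, 0 < z → μ.real {ω | I ω = 0} ≤ ∫ ω, Real.exp (-z * I ω) ∂μ := by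
    intro z hz
    have hint : Integrable (fun ω => Real.exp (-z * I ω)) μ := by
      refine Integrable.of_bound (by fun_prop) 1 (Eventually.of_forall fun ω => ?_)
      rw [Real.norm_eq_abs, abs_of_pos (Real.exp_pos _), Real.exp_le_one_iff]
      nlinarith [hI0 ω]
    rw [← integral_indicator_one hS]
    refine integral_mono ((integrable_const 1).indicator hS) hint fun ω => ?_
    by_cases h : I ω = 0
    · simp [h]
    · simp [h, (Real.exp_pos _).le]
  have h0 : μ.real {ω | I ω = 0} ≤ 0 :=
    ge_of_tendsto hL ((eventually_gt_atTop 0).mono hle)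
  have h1 : μ {ω | I ω = 0} = 0 := by
    rw [← measureReal_eq_zero_iff]
    exact le_antisymm h0 measureReal_nonneg
  have h2 : ∀ᵐ ω ∂μ, I ω ≠ 0 := by simpa [ae_iff] using h1
  filter_upwards [h2] with ω hω
  exact lt_of_le_of_ne (hI0 ω) (Ne.symm hω)

lemma integrable_exp_neg_sq : Integrable fun t : ℝ => Real.exp (-t ^ 2) := by
  simpa using integrable_exp_neg_mul_sq (b := 1) one_pos

lemma erfc_eq (x : ℝ) :
    erfc x = 1 - (2 / Real.sqrt π) * ∫ t in (0:ℝ)..x, Real.exp (-t ^ 2) := by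
  have h1 : ∫ t in Set.Ioi (0:ℝ), Real.exp (-t ^ 2) = Real.sqrt π / 2 := by
    simpa using integral_gaussian_Ioi 1
  have h2 := intervalIntegral.integral_interval_add_Ioi (a := 0) (b := x)
    integrable_exp_neg_sq.integrableOn integrable_exp_neg_sq.integrableOn
  have hpi : Real.sqrt π ≠ 0 := by positivity
  rw [h1] at h2
  rw [erfc, eq_sub_of_add_eq' h2]
  field_simp

lemma erfc_zero : erfc 0 = 1 := by simp [erfc_eq]

lemma erfc_nonneg (x : ℝ) : 0 ≤ erfc x :=
  mul_nonneg (by positivity) (integral_nonneg fun _ => (Real.exp_pos _).le)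

lemma hasDerivAt_erfc (x : ℝ) :
    HasDerivAt erfc (-((2 / Real.sqrt π) * Real.exp (-x ^ 2))) x := by
  have hc : Continuous fun t : ℝ => Real.exp (-t ^ 2) := by fun_prop
  have h := (intervalIntegral.integral_hasDerivAt_right (hc.intervalIntegrable 0 x)
    (hc.stronglyMeasurableAtFilter _ _) hc.continuousAt)
  rw [show erfc = fun x => 1 - (2 / Real.sqrt π) * ∫ t in (0:ℝ)..x, Real.exp (-t ^ 2) from
    funext erfc_eq]
  exact (h.const_mul (2 / Real.sqrt π)).const_sub 1

lemma continuous_erfc : Continuous erfc :=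
  continuous_iff_continuousAt.mpr fun x => (hasDerivAt_erfc x).continuousAt

open Filter Topology in
lemma tendsto_erfc : Tendsto erfc atTop (𝓝 0) := by
  have h := intervalIntegral_tendsto_integral_Ioi 0 integrable_exp_neg_sq.integrableOn tendsto_id
  have h2 := (h.const_mul (2 / Real.sqrt π)).const_sub 1
  change Tendsto _ _ (𝓝 (1 - erfc 0)) at h2
  rw [erfc_zero, sub_self] at h2
  exact h2.congr fun x => (erfc_eq x).symm

lemma hasDerivAt_erfc_sqrt {x : ℝ} (hx : 0 < x) :
    HasDerivAt (fun x => erfc (Real.sqrt x))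
      (-((1 / Real.sqrt π) * (x ^ (-(1/2) : ℝ) * Real.exp (-x)))) x := by
  have h := (hasDerivAt_erfc (Real.sqrt x)).comp x (Real.hasDerivAt_sqrt hx.ne')
  refine h.congr_deriv ?_
  rw [Real.sq_sqrt hx.le, Real.rpow_neg hx.le, ← Real.sqrt_eq_rpow]
  have : Real.sqrt x ≠ 0 := by positivity
  field_simp

/-- ASEP building blocks in a Poisson cellular network with `η = 4`: with `H` unit-rate
exponential, `I ≥ 0` independent of `H` with Laplace transform
`E[e^{−zI}] = exp{−πλ√(zP) arctan(√(zP)/r₀²)}`, and SINR `Υ = P H r₀^{−4}/(I + N₀)`,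
both `E[erfc(√(βΥ))]` and `E[erfc²(√(βΥ))]` are given by explicit integrals. -/
theorem stmt12 {Ω : Type*} [MeasurableSpace Ω] (μ : Measure Ω) [IsProbabilityMeasure μ]
    (lam P r₀ N₀ β : ℝ) (hlam : 0 < lam) (hP : 0 < P) (hr₀ : 0 < r₀) (hN₀ : 0 ≤ N₀)
    (hβ : 0 < β)
    (H I : Ω → ℝ) (hH : Measurable H) (hI : Measurable I)
    (hHexp : μ.map H = expMeasure 1)
    (hInonneg : ∀ ω, 0 ≤ I ω)
    (hindep : IndepFun H I μ)
    (hLT : ∀ z : ℝ, 0 < z → ∫ ω, Real.exp (-z * I ω) ∂μ =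
      Real.exp (-(π * lam * Real.sqrt (z * P) * Real.arctan (Real.sqrt (z * P) / r₀ ^ 2))))
    (Υ : Ω → ℝ) (hΥ : ∀ ω, Υ ω = P * H ω * r₀ ^ (-4 : ℤ) / (I ω + N₀)) :
    (∫ ω, erfc (Real.sqrt (β * Υ ω)) ∂μ =
      1 - (1 / Real.sqrt π) * ∫ z in Set.Ioi (0:ℝ),
        z ^ (-(1/2) : ℝ) *
          Real.exp (-(z * (1 + N₀ * r₀ ^ 4 / (P * β))) -
            π * lam * r₀ ^ 2 * Real.sqrt (z / β) * Real.arctan (Real.sqrt (z / β)))) ∧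
    (∫ ω, (erfc (Real.sqrt (β * Υ ω))) ^ 2 ∂μ =
      1 - (2 / Real.sqrt π) * ∫ z in Set.Ioi (0:ℝ),
        z ^ (-(1/2) : ℝ) * erfc (Real.sqrt z) *
          Real.exp (-(z * (1 + N₀ * r₀ ^ 4 / (P * β))) -
            π * lam * r₀ ^ 2 * Real.sqrt (z / β) * Real.arctan (Real.sqrt (z / β)))) := by
  have hpos : ∀ᵐ ω ∂μ, 0 < I ω := by
    refine ae_pos_of_laplace μ hI hInonneg ?_
    have hs : Filter.Tendsto (fun z : ℝ => Real.sqrt (z * P)) Filter.atTop Filter.atTop :=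
      Real.tendsto_sqrt_atTop.comp (Filter.tendsto_id.atTop_mul_const hP)
    have ha : Filter.Tendsto (fun z : ℝ => Real.arctan (Real.sqrt (z * P) / r₀ ^ 2)) Filter.atTop
        (nhds (π / 2)) :=
      (Real.tendsto_arctan_atTop.mono_right nhdsWithin_le_nhds).comp
        (hs.atTop_div_const (by positivity))
    have hprod := (hs.const_mul_atTop (show 0 < π * lam by positivity)).atTop_mul_pos
      (show 0 < π / 2 by positivity) ha
    refine Filter.Tendsto.congr' ?_ (Real.tendsto_exp_neg_atTop_nhds_zero.comp hprod)
    filter_upwards [Filter.eventually_gt_atTop 0] with z hz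
    exact (hLT z hz).symm
  have hΥm : Measurable fun ω => β * Υ ω := by
    rw [show Υ = fun ω => P * H ω * r₀ ^ (-4 : ℤ) / (I ω + N₀) from funext hΥ]
    fun_prop
  have htail : ∀ z : ℝ, 0 < z → μ.real {ω | z < β * Υ ω} =
      Real.exp (-(z * (N₀ * r₀ ^ 4 / (P * β))) -
        π * lam * r₀ ^ 2 * Real.sqrt (z / β) * Real.arctan (Real.sqrt (z / β))) := by
    intro z hz
    set c : ℝ := z * r₀ ^ 4 / (P * β) with hc
    have hc0 : 0 < c := by positivity
    have hset : μ.real {ω | z < β * Υ ω} = μ.real {ω | c * (I ω + N₀) < H ω} := by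
      refine measureReal_congr ?_
      filter_upwards [hpos] with ω hω
      have hden : 0 < I ω + N₀ := by linarith
      refine propext ?_
      change z < β * Υ ω ↔ c * (I ω + N₀) < H ω
      have e : β * Υ ω = β * P * H ω / (r₀ ^ 4 * (I ω + N₀)) := by
        rw [hΥ, show (r₀ ^ (-4 : ℤ) : ℝ) = (r₀ ^ 4)⁻¹ from by
          rw [zpow_neg]; norm_cast]
        field_simp
      have e2 : c * (I ω + N₀) = z * (r₀ ^ 4 * (I ω + N₀)) / (P * β) := by
        rw [hc]; ring
      rw [e, e2, lt_div_iff₀ (by positivity), div_lt_iff₀ (by positivity),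
        show H ω * (P * β) = β * P * H ω by ring]
    have hcomp : IndepFun H (fun ω => c * (I ω + N₀)) μ :=
      hindep.comp (φ := id) (ψ := fun y => c * (y + N₀)) measurable_id (by fun_prop)
    rw [hset, measureReal_exp_tail μ hH (by fun_prop) hHexp hcomp
      (fun ω => mul_nonneg hc0.le (add_nonneg (hInonneg ω) hN₀))]
    have e3 : ∀ ω, Real.exp (-(c * (I ω + N₀))) = Real.exp (-(c * N₀)) * Real.exp (-c * I ω) := by
      intro ω; rw [← Real.exp_add]; congr 1; ring
    simp_rw [e3]
    have e4 : Real.sqrt (c * P) = r₀ ^ 2 * Real.sqrt (z / β) := by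
      rw [show c * P = (r₀ ^ 2) ^ 2 * (z / β) by rw [hc]; field_simp,
        Real.sqrt_mul (by positivity), Real.sqrt_sq (by positivity)]
    rw [integral_const_mul, hLT c hc0, ← Real.exp_add, e4,
      mul_div_cancel_left₀ _ (show r₀ ^ 2 ≠ 0 by positivity)]
    congr 1
    rw [hc]; ring
  have hsqrt0 : ∀ x : ℝ, x ≤ 0 → erfc (Real.sqrt x) = 1 := fun x hx => by
    rw [Real.sqrt_eq_zero_of_nonpos hx, erfc_zero]
  have hcs : Continuous fun x => erfc (Real.sqrt x) := continuous_erfc.comp Real.continuous_sqrt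
  have hlim : Filter.Tendsto (fun x => erfc (Real.sqrt x)) Filter.atTop (nhds 0) :=
    tendsto_erfc.comp Real.tendsto_sqrt_atTop
  have hbd : ∀ x, 0 ≤ x → erfc x ≤ 1 := fun x hx => by
    rw [erfc_eq, sub_le_self_iff]
    exact mul_nonneg (by positivity)
      (intervalIntegral.integral_nonneg hx fun _ _ => (Real.exp_pos _).le)
  have hmeas : Measurable fun ω => erfc (Real.sqrt (β * Υ ω)) := hcs.measurable.comp hΥm
  have hi1 : Integrable (fun ω => erfc (Real.sqrt (β * Υ ω))) μ := by
    refine Integrable.of_bound hmeas.aestronglyMeasurable 1 (Filter.Eventually.of_forall fun ω => ?_)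
    rw [Real.norm_eq_abs, abs_of_nonneg (erfc_nonneg _)]
    exact hbd _ (Real.sqrt_nonneg _)
  have hi2 : Integrable (fun ω => erfc (Real.sqrt (β * Υ ω)) ^ 2) μ := by
    refine Integrable.of_bound (hmeas.pow_const 2).aestronglyMeasurable 1
      (Filter.Eventually.of_forall fun ω => ?_)
    rw [Real.norm_eq_abs, abs_of_nonneg (sq_nonneg _)]
    exact pow_le_one₀ (erfc_nonneg _) (hbd _ (Real.sqrt_nonneg _))
  have hsplit : ∀ z : ℝ, Real.exp (-(z * (1 + N₀ * r₀ ^ 4 / (P * β))) -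
        π * lam * r₀ ^ 2 * Real.sqrt (z / β) * Real.arctan (Real.sqrt (z / β))) =
      Real.exp (-z) * Real.exp (-(z * (N₀ * r₀ ^ 4 / (P * β))) -
        π * lam * r₀ ^ 2 * Real.sqrt (z / β) * Real.arctan (Real.sqrt (z / β))) := by
    intro z; rw [← Real.exp_add]; congr 1; ring
  -- Here `μ.real {ω | z < β * Υ ω}` supplies every factor but `e^{-z}`, which comes from the
  -- derivative of `G`.
  constructor
  · have key := integral_comp_eq_integral_tail μ hΥm (G := fun x => 1 - erfc (Real.sqrt x))
      (continuous_const.sub hcs) (fun x hx => by simp [hsqrt0 x hx])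
      (fun x hx => (hasDerivAt_erfc_sqrt hx).const_sub 1)
      (fun x hx => by rw [neg_neg]; positivity) (hlim.const_sub 1)
    rw [integral_sub (integrable_const 1) hi1, integral_const, probReal_univ, one_smul] at key
    rw [← integral_const_mul, eq_sub_iff_add_eq', ← eq_sub_iff_add_eq, key]
    refine setIntegral_congr_fun measurableSet_Ioi fun z hz => ?_
    rw [htail z hz, hsplit]
    ring
  · have key := integral_comp_eq_integral_tail μ hΥm (G := fun x => 1 - erfc (Real.sqrt x) ^ 2)
      (continuous_const.sub (hcs.pow 2)) (fun x hx => by simp [hsqrt0 x hx])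
      (fun x hx => ((hasDerivAt_erfc_sqrt hx).pow 2).const_sub 1)
      (fun x hx => by
        have := erfc_nonneg (Real.sqrt x)
        simp only [mul_neg, neg_neg]; positivity) ((hlim.pow 2).const_sub 1)
    rw [integral_sub (integrable_const 1) hi2, integral_const, probReal_univ, one_smul] at key
    rw [← integral_const_mul, eq_sub_iff_add_eq', ← eq_sub_iff_add_eq, key]
    refine setIntegral_congr_fun measurableSet_Ioi fun z hz => ?_
    rw [htail z hz, hsplit]
    push_cast
    ring
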